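/- arXiv:2512.16346 — 8 statements merged into one kernel-verified Lean document; each statement's English description precedes it below -/
import Mathlib

section
/- The characteristic polynomial of the primitive-variable MHD matrix D^x factors through the magnetosonic quadratics: for all real γ > 1, ρ > 0, p > 0 and u, v, w, b1, b2, b3 ∈ ℝ, one has, as an identity of polynomials in X over ℝ, det(X·I₈ − D^x) = (X − u)² · ((X − u)² − b1²/ρ) · ((X − u)⁴ − (c² + |b|²/ρ)(X − u)² + c²b1²/ρ), where c² = γp/ρ and |b|² = b1² + b2² + b3². Hence the eigenvalues of D^x are u, u (double), u ± c_a, u ± c_f, and u ± c_s. -/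
open Polynomial

set_option maxHeartbeats 4000000 in
theorem det_six {R : Type*} [CommRing R] (y s g b1 b2 b3 t2 t3 t1 : R) :
    Matrix.det !![y, 0, 0, -s, -t2, -t3;
                  0, y, 0, 0, t1, 0;
                  0, 0, y, 0, 0, t1;
                  -g, 0, 0, y, 0, 0;
                  -b2, b1, 0, 0, y, 0;
                  -b3, 0, b1, 0, 0, y] =
      (y ^ 2 - b1 * t1) *
        (y ^ 4 - (g * s + b1 * t1 + b2 * t2 + b3 * t3) * y ^ 2 + g * s * (b1 * t1)) := by
  simp [Matrix.det_succ_row_zero, Fin.sum_univ_succ, Fin.succAbove]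
  ring

set_option maxHeartbeats 4000000 in
theorem det_aux {R : Type*} [CommRing R] (y r s g b1 b2 b3 t2 t3 t1 : R) :
    Matrix.det !![y, -r, 0, 0, 0, 0, 0, 0;
                   0, y, 0, 0, -s, 0, -t2, -t3;
                   0, 0, y, 0, 0, 0, t1, 0;
                   0, 0, 0, y, 0, 0, 0, t1;
                   0, -g, 0, 0, y, 0, 0, 0;
                   0, 0, 0, 0, 0, y, 0, 0;
                   0, -b2, b1, 0, 0, 0, y, 0;
                   0, -b3, 0, b1, 0, 0, 0, y] =
      y ^ 2 * (y ^ 2 - b1 * t1) *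
        (y ^ 4 - (g * s + b1 * t1 + b2 * t2 + b3 * t3) * y ^ 2 + g * s * (b1 * t1)) := by
  rw [Matrix.det_succ_column_zero, Finset.sum_eq_single 0 (by
    intro i _ hi
    fin_cases i <;> simp at hi ⊢) (by simp)]
  rw [Matrix.det_succ_row _ 4, Finset.sum_eq_single 4 (by
    intro i _ hi
    fin_cases i <;> first | exact absurd rfl hi | simp [Fin.succAbove]) (by simp)]
  have h : ∀ M N : Matrix (Fin 6) (Fin 6) R, M = N → M.det = N.det := fun _ _ h => by rw [h]
  rw [h _ !![y, 0, 0, -s, -t2, -t3;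
            0, y, 0, 0, t1, 0;
            0, 0, y, 0, 0, t1;
            -g, 0, 0, y, 0, 0;
            -b2, b1, 0, 0, y, 0;
            -b3, 0, b1, 0, 0, y] (by
    ext i j
    fin_cases i <;> fin_cases j <;> rfl), det_six]
  simp [Fin.succAbove]
  ring

/-- The characteristic polynomial of the primitive-variable MHD matrix `D^x` factors
through the magnetosonic quadratics:
`det(X·I₈ − D^x) = (X − u)²((X − u)² − b1²/ρ)((X − u)⁴ − (c² + |b|²/ρ)(X − u)² + c²b1²/ρ)`,
where `c² = γp/ρ` and `|b|² = b1² + b2² + b3²`. Hence the eigenvalues of `D^x` are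
`u` (double), `u ± c_a`, `u ± c_f`, and `u ± c_s`. -/
theorem mhd_primitive_charpoly
    (γ ρ p u v w b1 b2 b3 : ℝ) (hγ : 1 < γ) (hρ : 0 < ρ) (hp : 0 < p)
    (Dx : Matrix (Fin 8) (Fin 8) ℝ)
    (hDx : Dx = !![u, ρ, 0, 0, 0, 0, 0, 0;
                   0, u, 0, 0, 1/ρ, 0, b2/ρ, b3/ρ;
                   0, 0, u, 0, 0, 0, -b1/ρ, 0;
                   0, 0, 0, u, 0, 0, 0, -b1/ρ;
                   0, γ*p, 0, 0, u, 0, 0, 0;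
                   0, 0, 0, 0, 0, u, 0, 0;
                   0, b2, -b1, 0, 0, 0, u, 0;
                   0, b3, 0, -b1, 0, 0, 0, u]) :
    Dx.charpoly =
      (X - C u) ^ 2 * ((X - C u) ^ 2 - C (b1 ^ 2 / ρ)) *
        ((X - C u) ^ 4 - C (γ * p / ρ + (b1 ^ 2 + b2 ^ 2 + b3 ^ 2) / ρ) * (X - C u) ^ 2 +
          C (γ * p / ρ * b1 ^ 2 / ρ)) := by
  have hm : Matrix.charmatrix Dx =
      !![X - C u, -C ρ, 0, 0, 0, 0, 0, 0;
         0, X - C u, 0, 0, -C (1/ρ), 0, -C (b2/ρ), -C (b3/ρ);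
         0, 0, X - C u, 0, 0, 0, C (b1/ρ), 0;
         0, 0, 0, X - C u, 0, 0, 0, C (b1/ρ);
         0, -C (γ*p), 0, 0, X - C u, 0, 0, 0;
         0, 0, 0, 0, 0, X - C u, 0, 0;
         0, -C b2, C b1, 0, 0, 0, X - C u, 0;
         0, -C b3, 0, C b1, 0, 0, 0, X - C u] := by
    subst hDx
    ext1 i j
    fin_cases i <;> fin_cases j <;>
      simp [neg_div]
  rw [Matrix.charpoly, hm, det_aux]
  have e1 : C b1 * C (b1 / ρ) = C (b1 ^ 2 / ρ) := by
    rw [← C_mul]; exact congrArg C (by ring)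
  have e2 : C (γ * p) * C (1 / ρ) + C (b1 ^ 2 / ρ) + C b2 * C (b2 / ρ) + C b3 * C (b3 / ρ) =
      C (γ * p / ρ + (b1 ^ 2 + b2 ^ 2 + b3 ^ 2) / ρ) := by
    simp only [← C_mul, ← C_add]
    exact congrArg C (by ring)
  have e3 : C (γ * p) * C (1 / ρ) * C (b1 ^ 2 / ρ) = C (γ * p / ρ * b1 ^ 2 / ρ) := by
    simp only [← C_mul]
    exact congrArg C (by ring)
  rw [e1, e2, e3]
end

section
/- The fast magnetosonic eigenvectors of the primitive-variable MHD matrix: under the stated hypotheses, the vector r₁ = (α̂_f ρ, −α̂_f c_f, α̂_s c_s β1 β2, α̂_s c_s β1 β3, α̂_f ρ c², 0, α̂_s √ρ c β2, α̂_s √ρ c β3)ᵀ satisfies D^x r₁ = (u − c_f) r₁, and the vector r₈ = (α̂_f ρ, α̂_f c_f, −α̂_s c_s β1 β2, −α̂_s c_s β1 β3, α̂_f ρ c², 0, α̂_s √ρ c β2, α̂_s √ρ c β3)ᵀ satisfies D^x r₈ = (u + c_f) r₈. -/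
set_option maxHeartbeats 1000000 in
/-- The fast magnetosonic eigenvectors of the primitive-variable MHD matrix `D^x`:
`D^x r₁ = (u − c_f) r₁` and `D^x r₈ = (u + c_f) r₈`. -/
theorem mhd_fast_eigenvectors
    (γ ρ p u v w b1 b2 b3 c ca D cf cs β1 β2 β3 αf αs : ℝ)
    (hγ : 1 < γ) (hρ : 0 < ρ) (hp : 0 < p) (hb : b2 ^ 2 + b3 ^ 2 > 0)
    (Dx : Matrix (Fin 8) (Fin 8) ℝ)
    (hDx : Dx = !![u, ρ, 0, 0, 0, 0, 0, 0;
                   0, u, 0, 0, 1/ρ, 0, b2/ρ, b3/ρ;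
                   0, 0, u, 0, 0, 0, -b1/ρ, 0;
                   0, 0, 0, u, 0, 0, 0, -b1/ρ;
                   0, γ*p, 0, 0, u, 0, 0, 0;
                   0, 0, 0, 0, 0, u, 0, 0;
                   0, b2, -b1, 0, 0, 0, u, 0;
                   0, b3, 0, -b1, 0, 0, 0, u])
    (hc : c = Real.sqrt (γ * p / ρ))
    (hca : ca = Real.sqrt (b1 ^ 2 / ρ))
    (hD : D = (c ^ 2 + (b1 ^ 2 + b2 ^ 2 + b3 ^ 2) / ρ) ^ 2 - 4 * c ^ 2 * b1 ^ 2 / ρ)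
    (hcf : cf = Real.sqrt ((c ^ 2 + (b1 ^ 2 + b2 ^ 2 + b3 ^ 2) / ρ + Real.sqrt D) / 2))
    (hcs : cs = Real.sqrt ((c ^ 2 + (b1 ^ 2 + b2 ^ 2 + b3 ^ 2) / ρ - Real.sqrt D) / 2))
    (hβ1 : β1 = Real.sign b1)
    (hβ2 : β2 = b2 / Real.sqrt (b2 ^ 2 + b3 ^ 2))
    (hβ3 : β3 = b3 / Real.sqrt (b2 ^ 2 + b3 ^ 2))
    (hαf : αf = Real.sqrt ((c ^ 2 - cs ^ 2) / (cf ^ 2 - cs ^ 2)))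
    (hαs : αs = Real.sqrt ((cf ^ 2 - c ^ 2) / (cf ^ 2 - cs ^ 2))) :
    Dx.mulVec ![αf * ρ, -αf * cf, αs * cs * β1 * β2, αs * cs * β1 * β3,
        αf * ρ * c ^ 2, 0, αs * Real.sqrt ρ * c * β2, αs * Real.sqrt ρ * c * β3] =
      (u - cf) • ![αf * ρ, -αf * cf, αs * cs * β1 * β2, αs * cs * β1 * β3,
        αf * ρ * c ^ 2, 0, αs * Real.sqrt ρ * c * β2, αs * Real.sqrt ρ * c * β3] ∧
    Dx.mulVec ![αf * ρ, αf * cf, -(αs * cs * β1 * β2), -(αs * cs * β1 * β3),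
        αf * ρ * c ^ 2, 0, αs * Real.sqrt ρ * c * β2, αs * Real.sqrt ρ * c * β3] =
      (u + cf) • ![αf * ρ, αf * cf, -(αs * cs * β1 * β2), -(αs * cs * β1 * β3),
        αf * ρ * c ^ 2, 0, αs * Real.sqrt ρ * c * β2, αs * Real.sqrt ρ * c * β3] := by
  have hx : 0 < γ * p / ρ := by positivity
  have hc0 : 0 < c := by rw [hc]; exact Real.sqrt_pos.mpr hx
  have hc2 : ρ * c ^ 2 = γ * p := by
    rw [hc, Real.sq_sqrt hx.le]; field_simp
  obtain ⟨s, hs⟩ : ∃ s, s = Real.sqrt ρ := ⟨_, rfl⟩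
  have hs0 : 0 < s := by rw [hs]; exact Real.sqrt_pos.mpr hρ
  have hs2 : ρ = s ^ 2 := by rw [hs, Real.sq_sqrt hρ.le]
  obtain ⟨B, hB⟩ : ∃ B, B = Real.sqrt (b2 ^ 2 + b3 ^ 2) := ⟨_, rfl⟩
  have hB0 : 0 < B := by rw [hB]; exact Real.sqrt_pos.mpr hb
  have hB2 : b2 ^ 2 + b3 ^ 2 = B ^ 2 := by rw [hB, Real.sq_sqrt hb.le]
  rw [← hB] at hβ2 hβ3
  have e2 : b2 = B * β2 := by rw [hβ2]; field_simp
  have e3 : b3 = B * β3 := by rw [hβ3]; field_simp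
  have hββ : β2 ^ 2 + β3 ^ 2 = 1 := by
    rw [hβ2, hβ3, div_pow, div_pow, ← add_div, hB2]; field_simp
  have hy : 0 ≤ b1 ^ 2 / ρ := by positivity
  have hz : 0 < B ^ 2 / ρ := by positivity
  have hsum : c ^ 2 + (b1 ^ 2 + b2 ^ 2 + b3 ^ 2) / ρ = c ^ 2 + b1 ^ 2 / ρ + B ^ 2 / ρ := by
    rw [← hB2]; ring
  rw [hsum] at hD hcf hcs
  have hxx : 0 < c ^ 2 := by positivity
  have hDe : D = (c ^ 2 + b1 ^ 2 / ρ + B ^ 2 / ρ) ^ 2 - 4 * c ^ 2 * (b1 ^ 2 / ρ) := by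
    rw [hD]; ring
  have hDpos : 0 < D := by
    rw [hDe]
    nlinarith [sq_nonneg (c ^ 2 - b1 ^ 2 / ρ), mul_pos hz hxx, mul_nonneg hz.le hy, mul_pos hz hz]
  obtain ⟨R, hR⟩ : ∃ R, R = Real.sqrt D := ⟨_, rfl⟩
  have hR0 : 0 < R := by rw [hR]; exact Real.sqrt_pos.mpr hDpos
  have hR2 : R ^ 2 = D := by rw [hR, Real.sq_sqrt hDpos.le]
  rw [← hR] at hcf hcs
  have hRle : R ≤ c ^ 2 + b1 ^ 2 / ρ + B ^ 2 / ρ := by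
    refine le_trans (le_abs_self R) (abs_le_of_sq_le_sq ?_ (by positivity))
    rw [hR2, hDe]
    nlinarith [mul_nonneg hxx.le hy]
  have hcf2 : cf ^ 2 = (c ^ 2 + b1 ^ 2 / ρ + B ^ 2 / ρ + R) / 2 := by
    rw [hcf, Real.sq_sqrt (by positivity)]
  have hcs2 : cs ^ 2 = (c ^ 2 + b1 ^ 2 / ρ + B ^ 2 / ρ - R) / 2 := by
    rw [hcs, Real.sq_sqrt (by linarith)]
  have hcf0 : 0 < cf := by rw [hcf]; exact Real.sqrt_pos.mpr (by positivity)
  have hcs0 : 0 ≤ cs := by rw [hcs]; exact Real.sqrt_nonneg _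
  have hPQ : (cf ^ 2 - c ^ 2) * (c ^ 2 - cs ^ 2) = (c * B / s) ^ 2 := by
    rw [hcf2, hcs2]
    have : (c * B / s) ^ 2 = c ^ 2 * (B ^ 2 / ρ) := by rw [hs2]; ring
    rw [this]
    linear_combination (1 / 4) * (hR2.trans hDe)
  have hprod : cf * cs = c * |b1| / s := by
    have h : (cf * cs) ^ 2 = (c * |b1| / s) ^ 2 := by
      have : (c * |b1| / s) ^ 2 = c ^ 2 * (b1 ^ 2 / ρ) := by
        rw [div_pow, mul_pow, sq_abs, hs2]; ring
      rw [this, mul_pow, hcf2, hcs2]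
      linear_combination (-1 / 4) * (hR2.trans hDe)
    exact (pow_left_inj₀ (by positivity) (by positivity) two_ne_zero).mp h
  have hfs : cf ^ 2 - cs ^ 2 = R := by rw [hcf2, hcs2]; ring
  have hPQ0 : 0 < (cf ^ 2 - c ^ 2) * (c ^ 2 - cs ^ 2) := by rw [hPQ]; positivity
  obtain ⟨P, hP⟩ : ∃ P, P = cf ^ 2 - c ^ 2 := ⟨_, rfl⟩
  obtain ⟨Q, hQ⟩ : ∃ Q, Q = c ^ 2 - cs ^ 2 := ⟨_, rfl⟩
  rw [hfs, ← hQ] at hαf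
  rw [hfs, ← hP] at hαs
  rw [← hP, ← hQ] at hPQ hPQ0
  have hPQs : P + Q = R := by rw [hP, hQ]; linarith
  have hP0 : 0 < P := by
    by_contra hn
    have : Q < 0 := by
      by_contra h2
      nlinarith [mul_nonneg (sub_nonneg.mpr (not_lt.mp hn)) (not_lt.mp h2)]
    linarith
  have hQ0 : 0 < Q := (mul_pos_iff_of_pos_left hP0).mp hPQ0
  have hcB : c * B / s = Real.sqrt P * Real.sqrt Q := by
    rw [← Real.sqrt_mul hP0.le, hPQ, Real.sqrt_sq (by positivity)]
  rw [Real.sqrt_div hQ0.le] at hαf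
  rw [Real.sqrt_div hP0.le] at hαs
  have k1 : αs * (c * B / s) = αf * (cf ^ 2 - c ^ 2) := by
    rw [hcB, hαf, hαs, ← hP]
    linear_combination (Real.sqrt Q / Real.sqrt R) * Real.sq_sqrt hP0.le
  have k2 : αf * (c * B / s) = αs * (c ^ 2 - cs ^ 2) := by
    rw [hcB, hαf, hαs, ← hQ]
    linear_combination (Real.sqrt P / Real.sqrt R) * Real.sq_sqrt hQ0.le
  have hsg : β1 * |b1| = b1 := by
    rw [hβ1]
    rcases lt_trichotomy b1 0 with h | h | h
    · rw [Real.sign_of_neg h, abs_of_neg h]; ring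
    · simp [h]
    · rw [Real.sign_of_pos h, abs_of_pos h]; ring
  have hsg' : b1 * β1 = |b1| := by
    rw [hβ1]
    rcases lt_trichotomy b1 0 with h | h | h
    · rw [Real.sign_of_neg h, abs_of_neg h]; ring
    · simp [h]
    · rw [Real.sign_of_pos h, abs_of_pos h]; ring
  -- the three scalar identities
  have m1 : αs * s * c * B / ρ = αf * (cf ^ 2 - c ^ 2) := by
    rw [← k1, hs2]; field_simp
  have m2 : b1 / ρ * (s * c) = cf * cs * β1 := by
    rw [hprod]
    nth_rewrite 1 [← hsg]
    rw [hs2]; field_simp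
  have m3 : B * αf * cf + b1 * β1 * (αs * cs) = cf * (αs * s * c) := by
    rw [hsg']
    have hb1 : |b1| = cf * cs * s / c := by rw [hprod]; field_simp
    have hBf : B * αf = αs * (c ^ 2 - cs ^ 2) * s / c := by rw [← k2]; field_simp
    rw [hb1, hBf]; field_simp; ring
  rw [← hs]
  have n1 : αf * c ^ 2 + b2 / ρ * (αs * s * c * β2) + b3 / ρ * (αs * s * c * β3)
      = αf * cf ^ 2 := by
    rw [e2, e3]
    linear_combination m1 + (αs * s * c * B / ρ) * hββ
  have n0 : ρ⁻¹ * (αf * ρ * c ^ 2) = αf * c ^ 2 := by field_simp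
  rw [hDx]
  constructor
  · ext i
    fin_cases i <;> simp [Matrix.mulVec, dotProduct, Fin.sum_univ_succ]
    · ring
    · linear_combination n0 + n1
    · linear_combination (-αs * β2) * m2
    · linear_combination (-αs * β3) * m2
    · linear_combination ((αf * cf)) * hc2
    · linear_combination (-(αf * cf)) * e2 + (-β2) * m3
    · linear_combination (-(αf * cf)) * e3 + (-β3) * m3
  · ext i
    fin_cases i <;> simp [Matrix.mulVec, dotProduct, Fin.sum_univ_succ]
    · ring
    · linear_combination n0 + n1
    · linear_combination (-αs * β2) * m2
    · linear_combination (-αs * β3) * m2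
    · linear_combination (-(αf * cf)) * hc2
    · linear_combination ((αf * cf)) * e2 + (β2) * m3
    · linear_combination ((αf * cf)) * e3 + (β3) * m3
end

section
/- The Alfvén eigenvectors of the primitive-variable MHD matrix: under the stated hypotheses, the vector r₂ = (0, 0, −β3, β2, 0, 0, −√ρ β1 β3, √ρ β1 β2)ᵀ satisfies D^x r₂ = (u − c_a) r₂, and the vector r₇ = (0, 0, β3, −β2, 0, 0, −√ρ β1 β3, √ρ β1 β2)ᵀ satisfies D^x r₇ = (u + c_a) r₇. -/
/-- The Alfvén eigenvectors of the primitive-variable MHD matrix `D^x`: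
`D^x r₂ = (u − c_a) r₂` and `D^x r₇ = (u + c_a) r₇`. -/
theorem mhd_alfven_eigenvectors
    (γ ρ p u v w b1 b2 b3 ca β1 β2 β3 : ℝ)
    (hγ : 1 < γ) (hρ : 0 < ρ) (hp : 0 < p) (hb : b2 ^ 2 + b3 ^ 2 > 0)
    (Dx : Matrix (Fin 8) (Fin 8) ℝ)
    (hDx : Dx = !![u, ρ, 0, 0, 0, 0, 0, 0;
                   0, u, 0, 0, 1/ρ, 0, b2/ρ, b3/ρ;
                   0, 0, u, 0, 0, 0, -b1/ρ, 0;
                   0, 0, 0, u, 0, 0, 0, -b1/ρ;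
                   0, γ*p, 0, 0, u, 0, 0, 0;
                   0, 0, 0, 0, 0, u, 0, 0;
                   0, b2, -b1, 0, 0, 0, u, 0;
                   0, b3, 0, -b1, 0, 0, 0, u])
    (hca : ca = Real.sqrt (b1 ^ 2 / ρ))
    (hβ1 : β1 = Real.sign b1)
    (hβ2 : β2 = b2 / Real.sqrt (b2 ^ 2 + b3 ^ 2))
    (hβ3 : β3 = b3 / Real.sqrt (b2 ^ 2 + b3 ^ 2)) :
    Dx.mulVec ![0, 0, -β3, β2, 0, 0, -(Real.sqrt ρ * β1 * β3), Real.sqrt ρ * β1 * β2] =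
      (u - ca) • ![0, 0, -β3, β2, 0, 0, -(Real.sqrt ρ * β1 * β3), Real.sqrt ρ * β1 * β2] ∧
    Dx.mulVec ![0, 0, β3, -β2, 0, 0, -(Real.sqrt ρ * β1 * β3), Real.sqrt ρ * β1 * β2] =
      (u + ca) • ![0, 0, β3, -β2, 0, 0, -(Real.sqrt ρ * β1 * β3), Real.sqrt ρ * β1 * β2] := by
  have hs : 0 < Real.sqrt ρ := Real.sqrt_pos.mpr hρ
  have hss : Real.sqrt ρ * Real.sqrt ρ = ρ := Real.mul_self_sqrt hρ.le
  have hca' : ca = |b1| / Real.sqrt ρ := by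
    rw [hca, Real.sqrt_div (sq_nonneg b1), Real.sqrt_sq_eq_abs]
  have ha : b1 * β1 = |b1| := by
    rw [hβ1]
    rcases lt_trichotomy b1 0 with h | h | h
    · rw [Real.sign_of_neg h, abs_of_neg h]; ring
    · simp [h]
    · rw [Real.sign_of_pos h, abs_of_pos h]; ring
  have hb' : |b1| * β1 = b1 := by
    rw [hβ1]
    rcases lt_trichotomy b1 0 with h | h | h
    · rw [Real.sign_of_neg h, abs_of_neg h]; ring
    · simp [h]
    · rw [Real.sign_of_pos h, abs_of_pos h]; ring
  have h1 : b1 / ρ * (Real.sqrt ρ * β1) = ca := by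
    rw [hca', ← ha]
    nth_rewrite 1 [← hss]
    field_simp
  have h2 : ca * (Real.sqrt ρ * β1) = b1 := by
    rw [hca']
    nth_rewrite 2 [← hb']
    field_simp
  have h3 : β3 * b2 = β2 * b3 := by
    rw [hβ2, hβ3]; ring
  clear hca hca' hβ1 hβ2 hβ3
  subst hDx
  constructor
  · ext i
    fin_cases i <;> simp [Matrix.mulVec, dotProduct, Fin.sum_univ_succ]
    · linear_combination (-(Real.sqrt ρ * β1) / ρ) * h3
    · linear_combination β3 * h1
    · linear_combination (-β2) * h1
    · linear_combination (-β3) * h2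
    · linear_combination β2 * h2
  · ext i
    fin_cases i <;> simp [Matrix.mulVec, dotProduct, Fin.sum_univ_succ]
    · linear_combination (-(Real.sqrt ρ * β1) / ρ) * h3
    · linear_combination β3 * h1
    · linear_combination (-β2) * h1
    · linear_combination β3 * h2
    · linear_combination (-β2) * h2
end

section
/- The slow magnetosonic eigenvectors of the primitive-variable MHD matrix: under the stated hypotheses, the vector r₃ = (α̂_s ρ, −α̂_s c_s, −α̂_f c_f β1 β2, −α̂_f c_f β1 β3, α̂_s ρ c², 0, −α̂_f √ρ c β2, −α̂_f √ρ c β3)ᵀ satisfies D^x r₃ = (u − c_s) r₃, and the vector r₆ = (α̂_s ρ, α̂_s c_s, α̂_f c_f β1 β2, α̂_f c_f β1 β3, α̂_s ρ c², 0, −α̂_f √ρ c β2, −α̂_f √ρ c β3)ᵀ satisfies D^x r₆ = (u + c_s) r₆. -/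
set_option maxHeartbeats 2000000 in
/-- The slow magnetosonic eigenvectors of the primitive-variable MHD matrix `D^x`:
`D^x r₃ = (u − c_s) r₃` and `D^x r₆ = (u + c_s) r₆`. -/
theorem mhd_slow_eigenvectors
    (γ ρ p u v w b1 b2 b3 c ca D cf cs β1 β2 β3 αf αs : ℝ)
    (hγ : 1 < γ) (hρ : 0 < ρ) (hp : 0 < p) (hb : b2 ^ 2 + b3 ^ 2 > 0)
    (Dx : Matrix (Fin 8) (Fin 8) ℝ)
    (hDx : Dx = !![u, ρ, 0, 0, 0, 0, 0, 0;
                   0, u, 0, 0, 1/ρ, 0, b2/ρ, b3/ρ;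
                   0, 0, u, 0, 0, 0, -b1/ρ, 0;
                   0, 0, 0, u, 0, 0, 0, -b1/ρ;
                   0, γ*p, 0, 0, u, 0, 0, 0;
                   0, 0, 0, 0, 0, u, 0, 0;
                   0, b2, -b1, 0, 0, 0, u, 0;
                   0, b3, 0, -b1, 0, 0, 0, u])
    (hc : c = Real.sqrt (γ * p / ρ))
    (hca : ca = Real.sqrt (b1 ^ 2 / ρ))
    (hD : D = (c ^ 2 + (b1 ^ 2 + b2 ^ 2 + b3 ^ 2) / ρ) ^ 2 - 4 * c ^ 2 * b1 ^ 2 / ρ)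
    (hcf : cf = Real.sqrt ((c ^ 2 + (b1 ^ 2 + b2 ^ 2 + b3 ^ 2) / ρ + Real.sqrt D) / 2))
    (hcs : cs = Real.sqrt ((c ^ 2 + (b1 ^ 2 + b2 ^ 2 + b3 ^ 2) / ρ - Real.sqrt D) / 2))
    (hβ1 : β1 = Real.sign b1)
    (hβ2 : β2 = b2 / Real.sqrt (b2 ^ 2 + b3 ^ 2))
    (hβ3 : β3 = b3 / Real.sqrt (b2 ^ 2 + b3 ^ 2))
    (hαf : αf = Real.sqrt ((c ^ 2 - cs ^ 2) / (cf ^ 2 - cs ^ 2)))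
    (hαs : αs = Real.sqrt ((cf ^ 2 - c ^ 2) / (cf ^ 2 - cs ^ 2))) :
    Dx.mulVec ![αs * ρ, -αs * cs, -(αf * cf * β1 * β2), -(αf * cf * β1 * β3),
        αs * ρ * c ^ 2, 0, -(αf * Real.sqrt ρ * c * β2), -(αf * Real.sqrt ρ * c * β3)] =
      (u - cs) • ![αs * ρ, -αs * cs, -(αf * cf * β1 * β2), -(αf * cf * β1 * β3),
        αs * ρ * c ^ 2, 0, -(αf * Real.sqrt ρ * c * β2), -(αf * Real.sqrt ρ * c * β3)] ∧
    Dx.mulVec ![αs * ρ, αs * cs, αf * cf * β1 * β2, αf * cf * β1 * β3,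
        αs * ρ * c ^ 2, 0, -(αf * Real.sqrt ρ * c * β2), -(αf * Real.sqrt ρ * c * β3)] =
      (u + cs) • ![αs * ρ, αs * cs, αf * cf * β1 * β2, αf * cf * β1 * β3,
        αs * ρ * c ^ 2, 0, -(αf * Real.sqrt ρ * c * β2), -(αf * Real.sqrt ρ * c * β3)] := by
  have hsp : 0 < Real.sqrt ρ := Real.sqrt_pos.mpr hρ
  have hBp : 0 < Real.sqrt (b2 ^ 2 + b3 ^ 2) := Real.sqrt_pos.mpr hb
  have hs2 : Real.sqrt ρ ^ 2 = ρ := Real.sq_sqrt hρ.le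
  have hB2 : Real.sqrt (b2 ^ 2 + b3 ^ 2) ^ 2 = b2 ^ 2 + b3 ^ 2 := Real.sq_sqrt hb.le
  generalize Real.sqrt ρ = s at *
  generalize Real.sqrt (b2 ^ 2 + b3 ^ 2) = B at *
  have hgp : 0 < γ * p / ρ := by positivity
  have hcp : 0 < c := by rw [hc]; exact Real.sqrt_pos.mpr hgp
  have hc2 : c ^ 2 = γ * p / ρ := by rw [hc]; exact Real.sq_sqrt hgp.le
  have hgp' : γ * p = ρ * c ^ 2 := by rw [hc2]; field_simp
  clear hc hc2 hgp
  obtain ⟨a, ha⟩ : ∃ a, a = |b1| / s := ⟨_, rfl⟩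
  obtain ⟨t, ht⟩ : ∃ t, t = B / s := ⟨_, rfl⟩
  have ha0 : 0 ≤ a := by rw [ha]; positivity
  have ht0 : 0 < t := by rw [ht]; positivity
  have hba : |b1| = s * a := by rw [ha]; field_simp
  have hBt : B = s * t := by rw [ht]; field_simp
  have hb1 : b1 ^ 2 = ρ * a ^ 2 := by rw [← sq_abs, hba, ← hs2]; ring
  have hS : (b1 ^ 2 + b2 ^ 2 + b3 ^ 2) / ρ = a ^ 2 + t ^ 2 := by
    rw [div_eq_iff hρ.ne', add_assoc, ← hB2, hb1, hBt, ← hs2]; ring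
  have hD' : D = (c ^ 2 + (a ^ 2 + t ^ 2)) ^ 2 - 4 * c ^ 2 * a ^ 2 := by
    rw [hD, hS, hb1]; field_simp
  rw [hS] at hcf hcs
  have hD0 : 0 ≤ D := by
    have h : D = (c ^ 2 + t ^ 2 - a ^ 2) ^ 2 + 4 * (a * t) ^ 2 := by rw [hD']; ring
    rw [h]; positivity
  have hR2 : Real.sqrt D ^ 2 = D := Real.sq_sqrt hD0
  have hR0 : 0 ≤ Real.sqrt D := Real.sqrt_nonneg D
  generalize Real.sqrt D = R at *
  have hRS : R ≤ c ^ 2 + (a ^ 2 + t ^ 2) := by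
    apply abs_le_of_sq_le_sq' _ (by positivity) |>.2
    have h : 0 ≤ 4 * c ^ 2 * a ^ 2 := by positivity
    rw [hR2, hD']; linarith
  have hcf2 : cf ^ 2 = (c ^ 2 + (a ^ 2 + t ^ 2) + R) / 2 := by
    rw [hcf]; exact Real.sq_sqrt (by positivity)
  have hcs2 : cs ^ 2 = (c ^ 2 + (a ^ 2 + t ^ 2) - R) / 2 := by
    rw [hcs]; exact Real.sq_sqrt (by linarith)
  have hcf0 : 0 ≤ cf := by rw [hcf]; exact Real.sqrt_nonneg _
  have hcs0 : 0 ≤ cs := by rw [hcs]; exact Real.sqrt_nonneg _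
  have hprod : cf * cs = c * a := by
    have h : (cf * cs) ^ 2 = (c * a) ^ 2 := by
      rw [mul_pow, hcf2, hcs2]
      linear_combination (-1/4) * hR2 + (-1/4) * hD'
    exact (sq_eq_sq₀ (by positivity) (by positivity)).mp h
  have hPQ : (cf ^ 2 - c ^ 2) * (c ^ 2 - cs ^ 2) = (c * t) ^ 2 := by
    rw [hcf2, hcs2]
    linear_combination (1/4) * hR2 + (1/4) * hD'
  have hsum : cf ^ 2 - cs ^ 2 = (cf ^ 2 - c ^ 2) + (c ^ 2 - cs ^ 2) := by ring
  have hR : cf ^ 2 - cs ^ 2 = R := by rw [hcf2, hcs2]; ring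
  have hpos : 0 < (cf ^ 2 - c ^ 2) * (c ^ 2 - cs ^ 2) := by rw [hPQ]; positivity
  obtain ⟨hP, hQ⟩ : 0 < cf ^ 2 - c ^ 2 ∧ 0 < c ^ 2 - cs ^ 2 := by
    rcases pos_and_pos_or_neg_and_neg_of_mul_pos hpos with h | h
    · exact h
    · linarith [h.1, h.2]
  rw [Real.sqrt_div hQ.le] at hαf
  rw [Real.sqrt_div hP.le] at hαs
  have hrt : Real.sqrt (cf ^ 2 - c ^ 2) * Real.sqrt (c ^ 2 - cs ^ 2) = c * t := by
    rw [← Real.sqrt_mul hP.le, hPQ]; exact Real.sqrt_sq (by positivity)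
  have hP2 := Real.sq_sqrt hP.le
  have hQ2 := Real.sq_sqrt hQ.le
  have F1 : αs * (c ^ 2 - cs ^ 2) = αf * (c * t) := by
    rw [hαs, hαf, ← hrt]; linear_combination (-(Real.sqrt (cf ^ 2 - c ^ 2) / Real.sqrt (cf ^ 2 - cs ^ 2))) * hQ2
  have F2 : αf * (cf ^ 2 - c ^ 2) = αs * (c * t) := by
    rw [hαs, hαf, ← hrt]; linear_combination (-(Real.sqrt (c ^ 2 - cs ^ 2) / Real.sqrt (cf ^ 2 - cs ^ 2))) * hP2
  clear hαs hαf hrt hP2 hQ2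
  have hsg : β1 * |b1| = b1 := by
    rw [hβ1]
    rcases lt_trichotomy b1 0 with h | h | h
    · rw [Real.sign_of_neg h, abs_of_neg h]; ring
    · simp [h]
    · rw [Real.sign_of_pos h, abs_of_pos h]; ring
  have hsg2 : b1 * β1 = |b1| := by
    rw [hβ1]
    rcases lt_trichotomy b1 0 with h | h | h
    · rw [Real.sign_of_neg h, abs_of_neg h]; ring
    · simp [h]
    · rw [Real.sign_of_pos h, abs_of_pos h]; ring
  rw [hba] at hsg hsg2
  have e2 : b2 = β2 * (s * t) := by rw [hβ2, ← hBt]; field_simp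
  have e3 : b3 = β3 * (s * t) := by rw [hβ3, ← hBt]; field_simp
  have hββ : β2 ^ 2 + β3 ^ 2 = 1 := by
    rw [hβ2, hβ3, div_pow, div_pow, ← add_div, ← hB2]; field_simp
  have G : αs * t * cs = αf * (a * cf - cs * c) := by
    apply mul_left_cancel₀ hcp.ne'
    linear_combination (-cs) * F2 + αf * cf * hprod
  -- row 2
  have R2 : 1 / ρ * (αs * ρ * c ^ 2) - b2 / ρ * (αf * s * c * β2)
      - b3 / ρ * (αf * s * c * β3) = αs * cs ^ 2 := by
    rw [e2, e3, ← hs2]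
    field_simp
    linear_combination F1 - αf * t * c * hββ
  have R3 : b1 / ρ * (s * c) = cs * cf * β1 := by
    rw [← hsg, ← hs2]
    field_simp
    linear_combination (-β1) * hprod
  have R7 : αs * cs * (s * t) - αf * cf * (b1 * β1) = - cs * αf * s * c := by
    rw [hsg2]; linear_combination s * G
  subst hDx
  clear hγ hp hb hca hD hcf hcs hβ1 hβ2 hβ3 hD' hD0 hR2 hR0 hRS hcf2 hcs2 hPQ hsum hR hpos hP hQ hba hBt hS
  constructor
  · ext i
    fin_cases i <;> simp [Matrix.mulVec, dotProduct, Fin.sum_univ_succ]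
    · ring
    · linear_combination R2
    · linear_combination αf * β2 * R3
    · linear_combination αf * β3 * R3
    · linear_combination (-αs * cs) * hgp'
    · linear_combination (-β2) * R7 + (-αs * cs) * e2
    · linear_combination (-β3) * R7 + (-αs * cs) * e3
  · ext i
    fin_cases i <;> simp [Matrix.mulVec, dotProduct, Fin.sum_univ_succ]
    · ring
    · linear_combination R2
    · linear_combination αf * β2 * R3
    · linear_combination αf * β3 * R3
    · linear_combination (αs * cs) * hgp'
    · linear_combination (β2) * R7 + (αs * cs) * e2
    · linear_combination (β3) * R7 + (αs * cs) * e3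
end

section
/- Right eigenvector decomposition of the primitive-variable MHD matrix: under the stated hypotheses, let T^x be the 8×8 matrix whose columns are r₁, r₂, r₃, r₄ = e₁, r₅ = e₆, r₆, r₇, r₈ (the fast, Alfvén, slow, entropy, and divergence eigenvectors), and let Λ = diag(u − c_f, u − c_a, u − c_s, u, u, u + c_s, u + c_a, u + c_f). Then D^x · T^x = T^x · Λ. -/
set_option maxHeartbeats 4000000 in

/-- Right eigenvector decomposition of the primitive-variable MHD matrix: if `T^x` is the
matrix whose columns are the fast, Alfvén, slow, entropy, and divergence eigenvectors
`r₁, …, r₈` and `Λ = diag(u − c_f, u − c_a, u − c_s, u, u, u + c_s, u + c_a, u + c_f)`,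
then `D^x · T^x = T^x · Λ`. -/
theorem mhd_right_eigendecomposition
    (γ ρ p u v w b1 b2 b3 c ca D cf cs β1 β2 β3 αf αs : ℝ)
    (hγ : 1 < γ) (hρ : 0 < ρ) (hp : 0 < p) (hb : b2 ^ 2 + b3 ^ 2 > 0)
    (Dx : Matrix (Fin 8) (Fin 8) ℝ)
    (hDx : Dx = !![u, ρ, 0, 0, 0, 0, 0, 0;
                   0, u, 0, 0, 1/ρ, 0, b2/ρ, b3/ρ;
                   0, 0, u, 0, 0, 0, -b1/ρ, 0;
                   0, 0, 0, u, 0, 0, 0, -b1/ρ;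
                   0, γ*p, 0, 0, u, 0, 0, 0;
                   0, 0, 0, 0, 0, u, 0, 0;
                   0, b2, -b1, 0, 0, 0, u, 0;
                   0, b3, 0, -b1, 0, 0, 0, u])
    (hc : c = Real.sqrt (γ * p / ρ))
    (hca : ca = Real.sqrt (b1 ^ 2 / ρ))
    (hD : D = (c ^ 2 + (b1 ^ 2 + b2 ^ 2 + b3 ^ 2) / ρ) ^ 2 - 4 * c ^ 2 * b1 ^ 2 / ρ)
    (hcf : cf = Real.sqrt ((c ^ 2 + (b1 ^ 2 + b2 ^ 2 + b3 ^ 2) / ρ + Real.sqrt D) / 2))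
    (hcs : cs = Real.sqrt ((c ^ 2 + (b1 ^ 2 + b2 ^ 2 + b3 ^ 2) / ρ - Real.sqrt D) / 2))
    (hβ1 : β1 = Real.sign b1)
    (hβ2 : β2 = b2 / Real.sqrt (b2 ^ 2 + b3 ^ 2))
    (hβ3 : β3 = b3 / Real.sqrt (b2 ^ 2 + b3 ^ 2))
    (hαf : αf = Real.sqrt ((c ^ 2 - cs ^ 2) / (cf ^ 2 - cs ^ 2)))
    (hαs : αs = Real.sqrt ((cf ^ 2 - c ^ 2) / (cf ^ 2 - cs ^ 2)))
    (r1 r2 r3 r4 r5 r6 r7 r8 : Fin 8 → ℝ)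
    (hr1 : r1 = ![αf * ρ, -αf * cf, αs * cs * β1 * β2, αs * cs * β1 * β3,
        αf * ρ * c ^ 2, 0, αs * Real.sqrt ρ * c * β2, αs * Real.sqrt ρ * c * β3])
    (hr2 : r2 = ![0, 0, -β3, β2, 0, 0, -(Real.sqrt ρ * β1 * β3), Real.sqrt ρ * β1 * β2])
    (hr3 : r3 = ![αs * ρ, -αs * cs, -(αf * cf * β1 * β2), -(αf * cf * β1 * β3),
        αs * ρ * c ^ 2, 0, -(αf * Real.sqrt ρ * c * β2), -(αf * Real.sqrt ρ * c * β3)])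
    (hr4 : r4 = ![1, 0, 0, 0, 0, 0, 0, 0])
    (hr5 : r5 = ![0, 0, 0, 0, 0, 1, 0, 0])
    (hr6 : r6 = ![αs * ρ, αs * cs, αf * cf * β1 * β2, αf * cf * β1 * β3,
        αs * ρ * c ^ 2, 0, -(αf * Real.sqrt ρ * c * β2), -(αf * Real.sqrt ρ * c * β3)])
    (hr7 : r7 = ![0, 0, β3, -β2, 0, 0, -(Real.sqrt ρ * β1 * β3), Real.sqrt ρ * β1 * β2])
    (hr8 : r8 = ![αf * ρ, αf * cf, -(αs * cs * β1 * β2), -(αs * cs * β1 * β3),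
        αf * ρ * c ^ 2, 0, αs * Real.sqrt ρ * c * β2, αs * Real.sqrt ρ * c * β3])
    (Tx : Matrix (Fin 8) (Fin 8) ℝ)
    (hTx : Tx = Matrix.transpose (Matrix.of ![r1, r2, r3, r4, r5, r6, r7, r8])) :
    Dx * Tx =
      Tx * Matrix.diagonal ![u - cf, u - ca, u - cs, u, u, u + cs, u + ca, u + cf] := by
  have hρ0 : ρ ≠ 0 := hρ.ne'
  obtain ⟨s, hs⟩ : ∃ s, s = Real.sqrt ρ := ⟨_, rfl⟩
  have hs0 : 0 < s := hs ▸ Real.sqrt_pos.2 hρ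
  have hs2 : s ^ 2 = ρ := by rw [hs]; exact Real.sq_sqrt hρ.le
  obtain ⟨t, ht⟩ : ∃ t, t = Real.sqrt (b2 ^ 2 + b3 ^ 2) := ⟨_, rfl⟩
  have ht0 : 0 < t := ht ▸ Real.sqrt_pos.2 hb
  have ht2 : t ^ 2 = b2 ^ 2 + b3 ^ 2 := by rw [ht]; exact Real.sq_sqrt hb.le
  have hc0 : 0 < c := by rw [hc]; exact Real.sqrt_pos.2 (by positivity)
  have hc2 : γ * p = ρ * c ^ 2 := by
    rw [hc, Real.sq_sqrt (by positivity)]; field_simp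
  have hb2 : b2 = β2 * t := by rw [hβ2, ← ht]; field_simp
  have hb3 : b3 = β3 * t := by rw [hβ3, ← ht]; field_simp
  have hββ : β2 ^ 2 + β3 ^ 2 = 1 := by
    rw [hβ2, hβ3, ← ht]; field_simp; linarith
  have hca1 : ca = |b1| / s := by
    rw [hca, Real.sqrt_div (sq_nonneg _), Real.sqrt_sq_eq_abs, hs]
  have hsg : β1 * |b1| = b1 := by
    rw [hβ1]
    rcases lt_trichotomy b1 0 with h | h | h
    · rw [Real.sign_of_neg h, abs_of_neg h]; ring
    · simp [h]
    · rw [Real.sign_of_pos h, abs_of_pos h]; ring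
  have hsg2 : β1 * b1 = |b1| := by
    rw [hβ1]
    rcases lt_trichotomy b1 0 with h | h | h
    · rw [Real.sign_of_neg h, abs_of_neg h]; ring
    · simp [h]
    · rw [Real.sign_of_pos h, abs_of_pos h]; ring
  obtain ⟨A, hA⟩ : ∃ A, A = c ^ 2 + (b1 ^ 2 + b2 ^ 2 + b3 ^ 2) / ρ := ⟨_, rfl⟩
  rw [← hA] at hD hcf hcs
  have hA0 : 0 < A := by rw [hA]; positivity
  have hD1 : D = (c ^ 2 - (b1 ^ 2 + t ^ 2) / ρ) ^ 2 + 4 * c ^ 2 * t ^ 2 / ρ := by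
    rw [hD, hA, ht2]; field_simp; ring
  have hD0 : 0 < D := by rw [hD1]; positivity
  obtain ⟨d, hd⟩ : ∃ d, d = Real.sqrt D := ⟨_, rfl⟩
  have hd0 : 0 < d := hd ▸ Real.sqrt_pos.2 hD0
  have hd2 : d ^ 2 = D := by rw [hd]; exact Real.sq_sqrt hD0.le
  rw [← hd] at hcf hcs
  have hdA : d ≤ A := by
    apply (sq_le_sq₀ hd0.le hA0.le).1
    rw [hd2, hD]
    have : 0 ≤ 4 * c ^ 2 * b1 ^ 2 / ρ := by positivity
    linarith
  have hcf0 : 0 ≤ cf := hcf ▸ Real.sqrt_nonneg _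
  have hcs0 : 0 ≤ cs := hcs ▸ Real.sqrt_nonneg _
  have hcf2 : cf ^ 2 = (A + d) / 2 := by rw [hcf]; exact Real.sq_sqrt (by linarith)
  have hcs2 : cs ^ 2 = (A - d) / 2 := by rw [hcs]; exact Real.sq_sqrt (by linarith)
  have hsum : cf ^ 2 + cs ^ 2 = A := by rw [hcf2, hcs2]; ring
  have hdiff : cf ^ 2 - cs ^ 2 = d := by rw [hcf2, hcs2]; ring
  have hprod : cf ^ 2 * cs ^ 2 = c ^ 2 * b1 ^ 2 / ρ := by
    rw [hcf2, hcs2]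
    have : (A + d) / 2 * ((A - d) / 2) = (A ^ 2 - d ^ 2) / 4 := by ring
    rw [this, hd2, hD]; ring
  have hfs : s * (cf * cs) = c * |b1| := by
    have h1 : (s * (cf * cs)) ^ 2 = (c * |b1|) ^ 2 := by
      rw [mul_pow, mul_pow, mul_pow, hprod, hs2, sq_abs]; field_simp
    exact (sq_eq_sq₀ (by positivity) (by positivity)).1 h1
  -- the key product
  have hkey : (cf ^ 2 - c ^ 2) * (c ^ 2 - cs ^ 2) = (c * t / s) ^ 2 := by
    have : (cf ^ 2 - c ^ 2) * (c ^ 2 - cs ^ 2)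
      = c ^ 2 * (cf ^ 2 + cs ^ 2) - cf ^ 2 * cs ^ 2 - c ^ 4 := by ring
    rw [this, hsum, hprod, hA, div_pow, mul_pow, hs2, ht2]; field_simp; ring
  have hpos : 0 < (cf ^ 2 - c ^ 2) * (c ^ 2 - cs ^ 2) := by rw [hkey]; positivity
  have hX : 0 < cf ^ 2 - c ^ 2 := by
    by_contra h
    have h1 : 0 ≤ c ^ 2 - cs ^ 2 := by linarith
    exact absurd hpos (not_lt.2 (mul_nonpos_of_nonpos_of_nonneg (not_lt.1 h) h1))
  have hY : 0 < c ^ 2 - cs ^ 2 := (mul_pos_iff_of_pos_left hX).1 hpos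
  rw [hdiff] at hαf hαs
  have hαf0 : 0 ≤ αf := hαf ▸ Real.sqrt_nonneg _
  have hαs0 : 0 ≤ αs := hαs ▸ Real.sqrt_nonneg _
  have hαf2 : αf ^ 2 = (c ^ 2 - cs ^ 2) / d := by
    rw [hαf]; exact Real.sq_sqrt (by positivity)
  have hαs2 : αs ^ 2 = (cf ^ 2 - c ^ 2) / d := by
    rw [hαs]; exact Real.sq_sqrt (by positivity)
  have hk1 : αs * (c * t / s) = αf * (cf ^ 2 - c ^ 2) := by
    apply (sq_eq_sq₀ (by positivity) (by positivity)).1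
    rw [mul_pow, mul_pow, ← hkey, hαf2, hαs2]; ring
  have hk2 : αf * (c * t / s) = αs * (c ^ 2 - cs ^ 2) := by
    apply (sq_eq_sq₀ (by positivity) (by positivity)).1
    rw [mul_pow, mul_pow, ← hkey, hαf2, hαs2]; ring
  have hk1' : αs * c * t = s * αf * (cf ^ 2 - c ^ 2) := by
    field_simp at hk1; linarith
  have hk2' : αf * c * t = s * αs * (c ^ 2 - cs ^ 2) := by
    field_simp at hk2; linarith
  have hb1c : b1 * c = s * cf * cs * β1 := by
    linear_combination (-c) * hsg - β1 * hfs
  have hm1 : t * αf * cf + β1 * b1 * αs * cs = cf * αs * s * c := by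
    apply mul_left_cancel₀ hc0.ne'
    rw [hsg2]
    linear_combination cf * hk2' - αs * cs * hfs
  have hm2 : - t * αs * cs + β1 * b1 * αf * cf = cs * αf * s * c := by
    apply mul_left_cancel₀ hc0.ne'
    rw [hsg2]
    linear_combination (-cs) * hk1' - αf * cf * hfs
  have hca2 : ca * s = β1 * b1 := by rw [hca1, hsg2]; field_simp
  have hca3 : ca * s * β1 = b1 := by rw [hca2, hsg2]; linarith
  have hca4 : b1 * β1 = ca * s := by linarith
  rw [← hs] at hr1 hr2 hr3 hr6 hr7 hr8
  clear hβ1 hβ2 hβ3 hc hca hcf hcs hαf hαs hs ht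
  subst hs2 hb2 hb3
  rw [hc2] at hDx
  subst hTx hDx hr1 hr2 hr3 hr4 hr5 hr6 hr7 hr8
  have hs1 : s ≠ 0 := hs0.ne'
  clear hsg hsg2 hD hD1 hd2 hA hA0 hD0 hdA hsum hprod hdiff hkey hpos hX hY hk1 hk2 hcf2 hcs2 hαf2 hαs2 ht2 hc2 hca1 hfs
  ext i j
  rw [Matrix.mul_diagonal]
  fin_cases j <;> fin_cases i <;>
    simp [Matrix.mul_apply, Fin.sum_univ_succ] <;> try field_simp <;> try ring_nf
  all_goals first
    | (linear_combination c * t * αs * hββ + hk1')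
    | (linear_combination -(c * t * αf) * hββ - hk2')
    | (linear_combination (αs * β2) * hb1c)
    | (linear_combination (αf * β2) * hb1c)
    | (linear_combination β2 * hm1)
    | (linear_combination β2 * hm2)
    | (linear_combination β2 * hca3)
    | (linear_combination β2 * hca4)
    | (linear_combination -(αs * β2) * hb1c)
    | (linear_combination -(αf * β2) * hb1c)
    | (linear_combination -β2 * hm1)
    | (linear_combination -β2 * hm2)
    | (linear_combination -β2 * hca3)
    | (linear_combination -β2 * hca4)
    | (linear_combination (αs * β3) * hb1c)
    | (linear_combination (αf * β3) * hb1c)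
    | (linear_combination β3 * hm1)
    | (linear_combination β3 * hm2)
    | (linear_combination β3 * hca3)
    | (linear_combination β3 * hca4)
    | (linear_combination -(αs * β3) * hb1c)
    | (linear_combination -(αf * β3) * hb1c)
    | (linear_combination -β3 * hm1)
    | (linear_combination -β3 * hm2)
    | (linear_combination -β3 * hca3)
    | (linear_combination -β3 * hca4)
end

section
/- Biorthogonality of the left and right eigenvectors of the primitive-variable MHD matrix: under the stated hypotheses (including b1 ≠ 0), let T^x be the 8×8 matrix with columns r₁, …, r₈ and let S be the 8×8 matrix with rows ℓ₁ᵀ, …, ℓ₈ᵀ given by the explicit formulas below. Then S · T^x = I₈; that is, the displayed matrix S is the inverse of T^x. -/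
set_option maxHeartbeats 4000000 in
/-- Biorthogonality of the left and right eigenvectors of the primitive-variable MHD
matrix: the matrix `S` with rows `ℓ₁ᵀ, …, ℓ₈ᵀ` is the inverse of the matrix `T^x` with
columns `r₁, …, r₈`, i.e. `S · T^x = I₈`. -/
theorem mhd_eigenvector_biorthogonality
    (γ ρ p u v w b1 b2 b3 c ca D cf cs β1 β2 β3 αf αs : ℝ)
    (hγ : 1 < γ) (hρ : 0 < ρ) (hp : 0 < p) (hb : b2 ^ 2 + b3 ^ 2 > 0) (hb1 : b1 ≠ 0)
    (hc : c = Real.sqrt (γ * p / ρ))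
    (hca : ca = Real.sqrt (b1 ^ 2 / ρ))
    (hD : D = (c ^ 2 + (b1 ^ 2 + b2 ^ 2 + b3 ^ 2) / ρ) ^ 2 - 4 * c ^ 2 * b1 ^ 2 / ρ)
    (hcf : cf = Real.sqrt ((c ^ 2 + (b1 ^ 2 + b2 ^ 2 + b3 ^ 2) / ρ + Real.sqrt D) / 2))
    (hcs : cs = Real.sqrt ((c ^ 2 + (b1 ^ 2 + b2 ^ 2 + b3 ^ 2) / ρ - Real.sqrt D) / 2))
    (hβ1 : β1 = Real.sign b1)
    (hβ2 : β2 = b2 / Real.sqrt (b2 ^ 2 + b3 ^ 2))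
    (hβ3 : β3 = b3 / Real.sqrt (b2 ^ 2 + b3 ^ 2))
    (hαf : αf = Real.sqrt ((c ^ 2 - cs ^ 2) / (cf ^ 2 - cs ^ 2)))
    (hαs : αs = Real.sqrt ((cf ^ 2 - c ^ 2) / (cf ^ 2 - cs ^ 2)))
    (r1 r2 r3 r4 r5 r6 r7 r8 l1 l2 l3 l4 l5 l6 l7 l8 : Fin 8 → ℝ)
    (hr1 : r1 = ![αf * ρ, -αf * cf, αs * cs * β1 * β2, αs * cs * β1 * β3,
        αf * ρ * c ^ 2, 0, αs * Real.sqrt ρ * c * β2, αs * Real.sqrt ρ * c * β3])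
    (hr2 : r2 = ![0, 0, -β3, β2, 0, 0, -(Real.sqrt ρ * β1 * β3), Real.sqrt ρ * β1 * β2])
    (hr3 : r3 = ![αs * ρ, -αs * cs, -(αf * cf * β1 * β2), -(αf * cf * β1 * β3),
        αs * ρ * c ^ 2, 0, -(αf * Real.sqrt ρ * c * β2), -(αf * Real.sqrt ρ * c * β3)])
    (hr4 : r4 = ![1, 0, 0, 0, 0, 0, 0, 0])
    (hr5 : r5 = ![0, 0, 0, 0, 0, 1, 0, 0])
    (hr6 : r6 = ![αs * ρ, αs * cs, αf * cf * β1 * β2, αf * cf * β1 * β3,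
        αs * ρ * c ^ 2, 0, -(αf * Real.sqrt ρ * c * β2), -(αf * Real.sqrt ρ * c * β3)])
    (hr7 : r7 = ![0, 0, β3, -β2, 0, 0, -(Real.sqrt ρ * β1 * β3), Real.sqrt ρ * β1 * β2])
    (hr8 : r8 = ![αf * ρ, αf * cf, -(αs * cs * β1 * β2), -(αs * cs * β1 * β3),
        αf * ρ * c ^ 2, 0, αs * Real.sqrt ρ * c * β2, αs * Real.sqrt ρ * c * β3])
    (hl1 : l1 = (1 / (2 * c ^ 2)) • ![0, -αf * cf, αs * cs * β1 * β2, αs * cs * β1 * β3,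
        αf / ρ, 0, αs * c * β2 / Real.sqrt ρ, αs * c * β3 / Real.sqrt ρ])
    (hl2 : l2 = (1 / 2 : ℝ) • ![0, 0, -β3, β2, 0, 0,
        -(β1 * β3 / Real.sqrt ρ), β1 * β2 / Real.sqrt ρ])
    (hl3 : l3 = (1 / (2 * c ^ 2)) • ![0, -αs * cs, -(αf * cf * β1 * β2),
        -(αf * cf * β1 * β3), αs / ρ, 0, -(αf * c * β2 / Real.sqrt ρ),
        -(αf * c * β3 / Real.sqrt ρ)])
    (hl4 : l4 = ![1, 0, 0, 0, -(1 / c ^ 2), 0, 0, 0])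
    (hl5 : l5 = ![0, 0, 0, 0, 0, 1, 0, 0])
    (hl6 : l6 = (1 / (2 * c ^ 2)) • ![0, αs * cs, αf * cf * β1 * β2, αf * cf * β1 * β3,
        αs / ρ, 0, -(αf * c * β2 / Real.sqrt ρ), -(αf * c * β3 / Real.sqrt ρ)])
    (hl7 : l7 = (1 / 2 : ℝ) • ![0, 0, β3, -β2, 0, 0,
        -(β1 * β3 / Real.sqrt ρ), β1 * β2 / Real.sqrt ρ])
    (hl8 : l8 = (1 / (2 * c ^ 2)) • ![0, αf * cf, -(αs * cs * β1 * β2),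
        -(αs * cs * β1 * β3), αf / ρ, 0, αs * c * β2 / Real.sqrt ρ,
        αs * c * β3 / Real.sqrt ρ])
    (Tx S : Matrix (Fin 8) (Fin 8) ℝ)
    (hTx : Tx = Matrix.transpose (Matrix.of ![r1, r2, r3, r4, r5, r6, r7, r8]))
    (hS : S = Matrix.of ![l1, l2, l3, l4, l5, l6, l7, l8]) :
    S * Tx = 1 := by
  have hc2 : c ^ 2 = γ * p / ρ := by
    rw [hc]; exact Real.sq_sqrt (by positivity)
  have hcpos : 0 < c := by rw [hc]; exact Real.sqrt_pos.mpr (by positivity)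
  have hc2pos : 0 < c ^ 2 := by positivity
  obtain ⟨hA, hB⟩ : αf ^ 2 + αs ^ 2 = 1 ∧ αf ^ 2 * cf ^ 2 + αs ^ 2 * cs ^ 2 = c ^ 2 := by
    have ha : 0 ≤ b1 ^ 2 / ρ := by positivity
    have ht : 0 < (b2 ^ 2 + b3 ^ 2) / ρ := by positivity
    have hsum : (b1 ^ 2 + b2 ^ 2 + b3 ^ 2) / ρ = b1 ^ 2 / ρ + (b2 ^ 2 + b3 ^ 2) / ρ := by ring
    have hD' : D = (c ^ 2 + (b1 ^ 2 / ρ + (b2 ^ 2 + b3 ^ 2) / ρ)) ^ 2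
        - 4 * c ^ 2 * (b1 ^ 2 / ρ) := by rw [hD, hsum]; ring
    rw [hsum] at hcf hcs
    clear hD hsum hc hca hc2 hβ1 hβ2 hβ3
    generalize b1 ^ 2 / ρ = a at *
    generalize (b2 ^ 2 + b3 ^ 2) / ρ = t at *
    generalize c ^ 2 = C at *
    have hDpos : 0 < D := by
      rw [hD']
      nlinarith [sq_nonneg (C - a), mul_pos ht hc2pos, mul_nonneg ht.le ha, mul_pos ht ht]
    have hq : 0 < Real.sqrt D := Real.sqrt_pos.mpr hDpos
    have h1 : Real.sqrt D ≤ C + (a + t) :=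
      Real.sqrt_le_iff.mpr ⟨by positivity, by rw [hD']; nlinarith [mul_nonneg hc2pos.le ha]⟩
    have h2 : |C - (a + t)| ≤ Real.sqrt D := by
      apply Real.abs_le_sqrt
      rw [hD']; nlinarith [mul_pos ht hc2pos]
    obtain ⟨h3, h4⟩ := abs_le.mp h2
    have hcf2 : cf ^ 2 = (C + (a + t) + Real.sqrt D) / 2 := by
      rw [hcf]; exact Real.sq_sqrt (by positivity)
    have hcs2 : cs ^ 2 = (C + (a + t) - Real.sqrt D) / 2 := by
      rw [hcs]; exact Real.sq_sqrt (by linarith)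
    have hd : cf ^ 2 - cs ^ 2 > 0 := by linarith
    have hf : αf ^ 2 = (C - cs ^ 2) / (cf ^ 2 - cs ^ 2) := by
      rw [hαf]; exact Real.sq_sqrt (div_nonneg (by linarith) hd.le)
    have hs : αs ^ 2 = (cf ^ 2 - C) / (cf ^ 2 - cs ^ 2) := by
      rw [hαs]; exact Real.sq_sqrt (div_nonneg (by linarith) hd.le)
    rw [hf, hs]
    constructor
    · field_simp
      ring
    · field_simp
      ring
  have hβ : β2 ^ 2 + β3 ^ 2 = 1 := by
    rw [hβ2, hβ3, div_pow, div_pow, Real.sq_sqrt hb.le]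
    field_simp
  have hβ1s : β1 ^ 2 = 1 := by
    rcases Real.sign_apply_eq_of_ne_zero b1 hb1 with h | h <;> rw [hβ1, h] <;> norm_num
  have hs : 0 < Real.sqrt ρ := Real.sqrt_pos.mpr hρ
  have hsi : Real.sqrt ρ * (Real.sqrt ρ)⁻¹ = 1 := mul_inv_cancel₀ hs.ne'
  have hρi : ρ * ρ⁻¹ = 1 := mul_inv_cancel₀ hρ.ne'
  have hci : c ^ 2 * (c ^ 2)⁻¹ = 1 := mul_inv_cancel₀ hc2pos.ne'
  clear hc hca hD hcf hcs hβ1 hβ2 hβ3 hαf hαs hc2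
  generalize Real.sqrt ρ = s at *
  subst hTx hS hr1 hr2 hr3 hr4 hr5 hr6 hr7 hr8 hl1 hl2 hl3 hl4 hl5 hl6 hl7 hl8
  ext i j
  fin_cases i <;> fin_cases j <;>
    simp [Matrix.mul_apply, Fin.sum_univ_eight, -mul_eq_zero] <;>
    field_simp <;> grind
end

section
/- Semi-discrete preservation of the discrete divergence constraint: fix Nₓ, N_y ≥ 1, Δx, Δy > 0, θ > 0, and consider doubly periodic arrays of cell averages (Āⱼₖ), (B̄ⱼₖ) with Āⱼₖ + B̄ⱼₖ = 0 for all j, k. Let the one-sided interface values of A and B be obtained by the generalized minmod reconstruction (in x for the E/W values and in y for the N/S values), let uⱼₖ^{E,W,N,S}, vⱼₖ^{E,W,N,S}, (b1)ⱼₖ^{N,S}, (b2)ⱼₖ^{E,W}, (u_y)ⱼₖ^{E,W}, (v_x)ⱼₖ^{N,S} be arbitrary real arrays, and let s±ⱼ₊₁/₂,ₖ and s±ⱼ,ₖ₊₁/₂ be arbitrary speeds with s⁺ > 0 > s⁻ at every interface. Define the central-upwind fluxes 𝓕ⱼ₊₁/₂,ₖ and 𝓖ⱼ,ₖ₊₁/₂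 for (A, B) with flux functions F̃ = (uA − b2 u_y, uB + b2 u_y) and G̃ = (vA + b1 v_x, vB − b1 v_x). Then for every cell (j, k), the sum of the right-hand sides of the semi-discrete evolution equations dĀⱼₖ/dt = −(𝓕₁,ⱼ₊₁/₂,ₖ − 𝓕₁,ⱼ₋₁/₂,ₖ)/Δx − (𝓖₁,ⱼ,ₖ₊₁/₂ − 𝓖₁,ⱼ,ₖ₋₁/₂)/Δy and dB̄ⱼₖ/dt = −(𝓕₂,ⱼ₊₁/₂,ₖ − 𝓕₂,ⱼ₋₁/₂,ₖ)/Δx − (𝓖₂,ⱼ,ₖ₊₁/₂ − 𝓖₂,ⱼ,ₖ₋₁/₂)/Δy equals zero; i.e., d(Āⱼₖ + B̄ⱼₖ)/dt = 0, so the constraint Ā + B̄ = 0 is preserved by the semi-discrete scheme. -/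
/-- The minmod function: the minimum of the arguments if all are positive, the maximum if
all are negative, and zero otherwise. -/
noncomputable def minmod (z1 z2 z3 : ℝ) : ℝ :=
  if 0 < z1 ∧ 0 < z2 ∧ 0 < z3 then min z1 (min z2 z3)
  else if z1 < 0 ∧ z2 < 0 ∧ z3 < 0 then max z1 (max z2 z3)
  else 0

/-- The minmod function is odd. -/
theorem minmod_neg_args (a b c : ℝ) : minmod (-a) (-b) (-c) = -minmod a b c := by
  unfold minmod
  simp only [Left.neg_pos_iff, Left.neg_neg_iff, min_neg_neg, max_neg_neg]
  by_cases h1 : 0 < a ∧ 0 < b ∧ 0 < c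
  · have h2 : ¬ (a < 0 ∧ b < 0 ∧ c < 0) := fun h => lt_asymm h.1 h1.1
    simp [h1, h2]
  · by_cases h2 : a < 0 ∧ b < 0 ∧ c < 0
    · simp [h1, h2]
    · simp [h1, h2]

/-- Semi-discrete preservation of the discrete divergence constraint: for doubly periodic
cell averages with `Āⱼₖ + B̄ⱼₖ = 0`, with minmod-reconstructed interface values of `A`
and `B`, arbitrary interface data for the remaining fields, and arbitrary one-sided
speeds `s⁺ > 0 > s⁻`, the sum of the right-hand sides of the semi-discrete evolution
equations for `Āⱼₖ` and `B̄ⱼₖ` vanishes, i.e. `d(Āⱼₖ + B̄ⱼₖ)/dt = 0`. -/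
theorem semidiscrete_divergence_constraint_preserved
    (Nx Ny : ℕ) (hNx : 1 ≤ Nx) (hNy : 1 ≤ Ny)
    (Δx Δy θ : ℝ) (hΔx : 0 < Δx) (hΔy : 0 < Δy) (hθ : 0 < θ)
    (Ab Bb : ℤ → ℤ → ℝ)
    (hper : ∀ j k : ℤ, Ab (j + Nx) k = Ab j k ∧ Ab j (k + Ny) = Ab j k ∧
      Bb (j + Nx) k = Bb j k ∧ Bb j (k + Ny) = Bb j k)
    (hcon : ∀ j k : ℤ, Ab j k + Bb j k = 0)
    -- minmod slopes of A and B in the x- and y-directions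
    (sAx sAy sBx sBy : ℤ → ℤ → ℝ)
    (hsAx : ∀ j k : ℤ, sAx j k = minmod (θ * (Ab (j + 1) k - Ab j k) / Δx)
      ((Ab (j + 1) k - Ab (j - 1) k) / (2 * Δx)) (θ * (Ab j k - Ab (j - 1) k) / Δx))
    (hsAy : ∀ j k : ℤ, sAy j k = minmod (θ * (Ab j (k + 1) - Ab j k) / Δy)
      ((Ab j (k + 1) - Ab j (k - 1)) / (2 * Δy)) (θ * (Ab j k - Ab j (k - 1)) / Δy))
    (hsBx : ∀ j k : ℤ, sBx j k = minmod (θ * (Bb (j + 1) k - Bb j k) / Δx)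
      ((Bb (j + 1) k - Bb (j - 1) k) / (2 * Δx)) (θ * (Bb j k - Bb (j - 1) k) / Δx))
    (hsBy : ∀ j k : ℤ, sBy j k = minmod (θ * (Bb j (k + 1) - Bb j k) / Δy)
      ((Bb j (k + 1) - Bb j (k - 1)) / (2 * Δy)) (θ * (Bb j k - Bb j (k - 1)) / Δy))
    -- one-sided interface values of A and B
    (AE AW AN AS BE BW BN BS : ℤ → ℤ → ℝ)
    (hAE : ∀ j k : ℤ, AE j k = Ab j k + Δx / 2 * sAx j k)
    (hAW : ∀ j k : ℤ, AW j k = Ab j k - Δx / 2 * sAx j k)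
    (hAN : ∀ j k : ℤ, AN j k = Ab j k + Δy / 2 * sAy j k)
    (hAS : ∀ j k : ℤ, AS j k = Ab j k - Δy / 2 * sAy j k)
    (hBE : ∀ j k : ℤ, BE j k = Bb j k + Δx / 2 * sBx j k)
    (hBW : ∀ j k : ℤ, BW j k = Bb j k - Δx / 2 * sBx j k)
    (hBN : ∀ j k : ℤ, BN j k = Bb j k + Δy / 2 * sBy j k)
    (hBS : ∀ j k : ℤ, BS j k = Bb j k - Δy / 2 * sBy j k)
    -- arbitrary interface data for the remaining fields
    (uE uW uN uS vE vW vN vS b1N b1S b2E b2W uyE uyW vxN vxS : ℤ → ℤ → ℝ)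
    -- one-sided local speeds of propagation
    (spx smx spy smy : ℤ → ℤ → ℝ)
    (hsx : ∀ j k : ℤ, smx j k < 0 ∧ 0 < spx j k)
    (hsy : ∀ j k : ℤ, smy j k < 0 ∧ 0 < spy j k)
    -- central-upwind numerical fluxes; `F· j k` is the flux at interface (j+1/2, k)
    -- and `G· j k` is the flux at interface (j, k+1/2)
    (F1 F2 G1 G2 : ℤ → ℤ → ℝ)
    (hF1 : ∀ j k : ℤ, F1 j k =
      (spx j k * (uE j k * AE j k - b2E j k * uyE j k) -
        smx j k * (uW (j + 1) k * AW (j + 1) k - b2W (j + 1) k * uyW (j + 1) k)) /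
        (spx j k - smx j k) +
      spx j k * smx j k / (spx j k - smx j k) * (AW (j + 1) k - AE j k))
    (hF2 : ∀ j k : ℤ, F2 j k =
      (spx j k * (uE j k * BE j k + b2E j k * uyE j k) -
        smx j k * (uW (j + 1) k * BW (j + 1) k + b2W (j + 1) k * uyW (j + 1) k)) /
        (spx j k - smx j k) +
      spx j k * smx j k / (spx j k - smx j k) * (BW (j + 1) k - BE j k))
    (hG1 : ∀ j k : ℤ, G1 j k =
      (spy j k * (vN j k * AN j k + b1N j k * vxN j k) -
        smy j k * (vS j (k + 1) * AS j (k + 1) + b1S j (k + 1) * vxS j (k + 1))) /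
        (spy j k - smy j k) +
      spy j k * smy j k / (spy j k - smy j k) * (AS j (k + 1) - AN j k))
    (hG2 : ∀ j k : ℤ, G2 j k =
      (spy j k * (vN j k * BN j k - b1N j k * vxN j k) -
        smy j k * (vS j (k + 1) * BS j (k + 1) - b1S j (k + 1) * vxS j (k + 1))) /
        (spy j k - smy j k) +
      spy j k * smy j k / (spy j k - smy j k) * (BS j (k + 1) - BN j k)) :
    ∀ j k : ℤ,
      (-(F1 j k - F1 (j - 1) k) / Δx - (G1 j k - G1 j (k - 1)) / Δy) +
        (-(F2 j k - F2 (j - 1) k) / Δx - (G2 j k - G2 j (k - 1)) / Δy) = 0 := by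
  have hB : ∀ j k, Bb j k = -Ab j k := fun j k => by linarith [hcon j k]
  have hx : ∀ j k, sBx j k = -sAx j k := by
    intro j k
    rw [hsBx, hsAx, ← minmod_neg_args]
    simp only [hB]
    congr 1 <;> ring
  have hy : ∀ j k, sBy j k = -sAy j k := by
    intro j k
    rw [hsBy, hsAy, ← minmod_neg_args]
    simp only [hB]
    congr 1 <;> ring
  have hF : ∀ j k, F2 j k = -F1 j k := by
    intro j k
    rw [hF1, hF2, hBE, hBW, hAE, hAW, hx, hx, hB, hB]
    ring
  have hG : ∀ j k, G2 j k = -G1 j k := by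
    intro j k
    rw [hG1, hG2, hBN, hBS, hAN, hAS, hy, hy, hB, hB]
    ring
  intro j k
  rw [hF, hF, hG, hG]
  ring
end

section
/- Derivation of the augmented evolution equations for the magnetic-field derivatives in 2-D: let u, v, b1, b2 : ℝ × ℝ² → ℝ be twice continuously differentiable functions of (t, x, y) satisfying the 2-D induction equations (b1)ₜ + ∂_y(v b1 − u b2) = 0 and (b2)ₜ + ∂ₓ(u b2 − v b1) = 0, together with the divergence-free constraint ∂ₓ b1 + ∂_y b2 = 0 at every point. Then the functions A := ∂ₓ b1 and B := ∂_y b2 satisfy Aₜ + ∂ₓ(uA − b2 ∂_y u) + ∂_y(vA + b1 ∂ₓ v) = 0 and Bₜ + ∂ₓ(uB + b2 ∂_y u) + ∂_y(vB − b1 ∂ₓ v) = 0 at every point. -/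
/-- Partial derivative in `t` of a scalar function of `(t, x, y)`. -/
noncomputable def dT2 (f : ℝ × ℝ × ℝ → ℝ) (p : ℝ × ℝ × ℝ) : ℝ :=
  fderiv ℝ f p (1, 0, 0)

/-- Partial derivative in `x` of a scalar function of `(t, x, y)`. -/
noncomputable def dX2 (f : ℝ × ℝ × ℝ → ℝ) (p : ℝ × ℝ × ℝ) : ℝ :=
  fderiv ℝ f p (0, 1, 0)

/-- Partial derivative in `y` of a scalar function of `(t, x, y)`. -/
noncomputable def dY2 (f : ℝ × ℝ × ℝ → ℝ) (p : ℝ × ℝ × ℝ) : ℝ :=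
  fderiv ℝ f p (0, 0, 1)

/-- Directional derivative of a scalar function along a fixed vector. -/
noncomputable def dirD (w : ℝ × ℝ × ℝ) (f : ℝ × ℝ × ℝ → ℝ) (p : ℝ × ℝ × ℝ) : ℝ :=
  fderiv ℝ f p w

lemma dirD_mul (w : ℝ × ℝ × ℝ) {f g : ℝ × ℝ × ℝ → ℝ} (hf : Differentiable ℝ f)
    (hg : Differentiable ℝ g) (p : ℝ × ℝ × ℝ) :
    dirD w (fun q => f q * g q) p = dirD w f p * g p + f p * dirD w g p := by
  unfold dirD
  rw [fderiv_fun_mul (hf p) (hg p)]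
  simp
  ring

lemma dirD_add (w : ℝ × ℝ × ℝ) {f g : ℝ × ℝ × ℝ → ℝ} (hf : Differentiable ℝ f)
    (hg : Differentiable ℝ g) (p : ℝ × ℝ × ℝ) :
    dirD w (fun q => f q + g q) p = dirD w f p + dirD w g p := by
  unfold dirD
  rw [fderiv_fun_add (hf p) (hg p)]
  simp

lemma dirD_sub (w : ℝ × ℝ × ℝ) {f g : ℝ × ℝ × ℝ → ℝ} (hf : Differentiable ℝ f)
    (hg : Differentiable ℝ g) (p : ℝ × ℝ × ℝ) :
    dirD w (fun q => f q - g q) p = dirD w f p - dirD w g p := by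
  unfold dirD
  rw [fderiv_fun_sub (hf p) (hg p)]
  simp

lemma dirD_neg (w : ℝ × ℝ × ℝ) (f : ℝ × ℝ × ℝ → ℝ) (p : ℝ × ℝ × ℝ) :
    dirD w (fun q => - f q) p = - dirD w f p := by
  unfold dirD
  rw [fderiv_fun_neg]
  simp

lemma dirD_contDiff (w : ℝ × ℝ × ℝ) {f : ℝ × ℝ × ℝ → ℝ} (hf : ContDiff ℝ 2 f) :
    ContDiff ℝ 1 (dirD w f) :=
  (hf.fderiv_right (m := 1) (by norm_num)).clm_apply contDiff_const

lemma dirD_diff (w : ℝ × ℝ × ℝ) {f : ℝ × ℝ × ℝ → ℝ} (hf : ContDiff ℝ 2 f) :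
    Differentiable ℝ (dirD w f) :=
  (dirD_contDiff w hf).differentiable (by norm_num)

lemma dirD_comm (w z : ℝ × ℝ × ℝ) {f : ℝ × ℝ × ℝ → ℝ} (hf : ContDiff ℝ 2 f)
    (p : ℝ × ℝ × ℝ) : dirD w (dirD z f) p = dirD z (dirD w f) p := by
  have hd : Differentiable ℝ (fderiv ℝ f) :=
    (hf.fderiv_right (m := 1) (by norm_num)).differentiable (by norm_num)
  have key : ∀ a b, dirD a (dirD b f) p = fderiv ℝ (fderiv ℝ f) p a b := by
    intro a b
    unfold dirD
    rw [fderiv_clm_apply (hd p) (differentiableAt_const b)]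
    simp
  rw [key, key]
  have hs : IsSymmSndFDerivAt ℝ f p := hf.contDiffAt.isSymmSndFDerivAt (by simp)
  exact hs w z

/-- Derivation of the augmented evolution equations for the magnetic-field derivatives in
2-D: if `u, v, b1, b2` are twice continuously differentiable, satisfy the 2-D induction
equations `(b1)ₜ + (v b1 − u b2)_y = 0` and `(b2)ₜ + (u b2 − v b1)ₓ = 0`, and the
divergence-free constraint `(b1)ₓ + (b2)_y = 0`, then `A = (b1)ₓ` and `B = (b2)_y`
satisfy `Aₜ + (uA − b2 u_y)ₓ + (vA + b1 vₓ)_y = 0` and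
`Bₜ + (uB + b2 u_y)ₓ + (vB − b1 vₓ)_y = 0`. -/
theorem augmented_evolution_equations_2d
    (u v b1 b2 : ℝ × ℝ × ℝ → ℝ)
    (hu : ContDiff ℝ 2 u) (hv : ContDiff ℝ 2 v)
    (hb1 : ContDiff ℝ 2 b1) (hb2 : ContDiff ℝ 2 b2)
    (hind1 : ∀ p, dT2 b1 p + dY2 (fun q => v q * b1 q - u q * b2 q) p = 0)
    (hind2 : ∀ p, dT2 b2 p + dX2 (fun q => u q * b2 q - v q * b1 q) p = 0)
    (hdiv : ∀ p, dX2 b1 p + dY2 b2 p = 0)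
    (A B : ℝ × ℝ × ℝ → ℝ)
    (hA : ∀ p, A p = dX2 b1 p) (hB : ∀ p, B p = dY2 b2 p) :
    (∀ p, dT2 A p + dX2 (fun q => u q * A q - b2 q * dY2 u q) p +
      dY2 (fun q => v q * A q + b1 q * dX2 v q) p = 0) ∧
    (∀ p, dT2 B p + dX2 (fun q => u q * B q + b2 q * dY2 u q) p +
      dY2 (fun q => v q * B q - b1 q * dX2 v q) p = 0) := by
  have eT : dT2 = dirD (1, 0, 0) := rfl
  have eX : dX2 = dirD (0, 1, 0) := rfl
  have eY : dY2 = dirD (0, 0, 1) := rfl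
  rw [eT, eY] at hind1
  rw [eT, eX] at hind2
  rw [eX, eY] at hdiv
  rw [eX] at hA
  rw [eY] at hB
  rw [eT, eX, eY]
  obtain rfl : A = _ := funext hA
  obtain rfl : B = _ := funext hB
  clear eT eX eY hA hB
  generalize ((1, 0, 0) : ℝ × ℝ × ℝ) = t at *
  generalize ((0, 1, 0) : ℝ × ℝ × ℝ) = x at *
  generalize ((0, 0, 1) : ℝ × ℝ × ℝ) = y at *
  have du : Differentiable ℝ u := hu.differentiable (by norm_num)
  have dv : Differentiable ℝ v := hv.differentiable (by norm_num)
  have db1 : Differentiable ℝ b1 := hb1.differentiable (by norm_num)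
  have db2 : Differentiable ℝ b2 := hb2.differentiable (by norm_num)
  have cF : ContDiff ℝ 2 (fun q => v q * b1 q) := hv.mul hb1
  have cG : ContDiff ℝ 2 (fun q => u q * b2 q) := hu.mul hb2
  have dF := cF.differentiable (by norm_num)
  have dG := cG.differentiable (by norm_num)
  have e1 : dirD t b1 = fun q => dirD y (fun q => u q * b2 q) q - dirD y (fun q => v q * b1 q) q := by
    funext q
    have := hind1 q
    rw [dirD_sub y dF dG] at this
    linarith
  have e2 : dirD t b2 = fun q => dirD x (fun q => v q * b1 q) q - dirD x (fun q => u q * b2 q) q := by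
    funext q
    have := hind2 q
    rw [dirD_sub x dG dF] at this
    linarith
  have e3 : dirD y b2 = fun q => - dirD x b1 q := by
    funext q
    linarith [hdiv q]
  have hFx : dirD x (fun q => v q * b1 q) = fun q => v q * dirD x b1 q + b1 q * dirD x v q := by
    funext q
    rw [dirD_mul x dv db1]
    ring
  have hGy : dirD y (fun q => u q * b2 q) = fun q => u q * dirD y b2 q + b2 q * dirD y u q := by
    funext q
    rw [dirD_mul y du db2]
    ring
  have hGy' : (fun q => u q * dirD x b1 q - b2 q * dirD y u q)
      = fun q => - dirD y (fun q => u q * b2 q) q := by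
    funext q
    rw [hGy, e3]
    ring
  have hFx' : (fun q => v q * dirD y b2 q - b1 q * dirD x v q)
      = fun q => - dirD x (fun q => v q * b1 q) q := by
    funext q
    rw [hFx, e3]
    ring
  constructor
  · intro p
    rw [hGy', ← hFx, dirD_comm t x hb1, e1, dirD_sub x (dirD_diff y cG) (dirD_diff y cF),
      dirD_neg, dirD_comm x y cF]
    ring
  · intro p
    rw [hFx', ← hGy, dirD_comm t y hb2, e2, dirD_sub y (dirD_diff x cF) (dirD_diff x cG),
      dirD_neg, dirD_comm x y cG]
    ring
end
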